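/- For every deduction Π in I that is not in normal form, there exists a deduction Π′ in I with the same conclusion, whose undischarged assumptions are among those of Π, and whose rank is strictly smaller than the rank of Π (under the lexicographic order on ranks). -/

import Mathlib

set_option autoImplicit false

/-- Formulas of intuitionistic propositional logic: atomic formulas (indexed by
natural numbers), `⊥` (`falsum`), conjunction, disjunction and implication.
Following the paper, `⊥` is a (nullary) connective and not an atomic formula. -/
inductive Formula : Type
  | atom : ℕ → Formula
  | falsum : Formula
  | and : Formula → Formula → Formula
  | or : Formula → Formula → Formula
  | imp : Formula → Formula → Formula
  deriving DecidableEq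

/-- Deductions in Negri and von Plato's system **I** of intuitionistic
propositional logic with general introduction and elimination rules, indexed by
their conclusion.  Each constructor corresponds to a rule of the system:

* `ass A` : the one-formula deduction of `A` from the open assumption `A`;
* `andI d₁ d₂ d₃` : from deductions `d₁` of `A`, `d₂` of `B` (the specific
  premises) and a deduction `d₃` of `C` (the arbitrary premise) in which
  assumptions of the form `A ∧ B` may be discharged, infer `C`;
* `impI A d₁ d₂` : from a deduction `d₁` of `B` in which assumptions `A` may be
  discharged and a deduction `d₂` of `C` in which assumptions `A ⊃ B` may be
  discharged, infer `C`;
* `orI₁ B d₁ d₂` / `orI₂ A d₁ d₂` : from a deduction of `A` (respectively of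
  `B`) and a deduction of `C` in which assumptions `A ∨ B` may be discharged,
  infer `C`;
* `andE d₁ d₂` : from a deduction of the major premise `A ∧ B` and a deduction
  of `C` in which assumptions `A` and `B` may be discharged, infer `C`;
* `impE d₁ d₂ d₃` : from a deduction of the major premise `A ⊃ B`, a deduction
  of the minor premise `A`, and a deduction of `C` in which assumptions `B`
  may be discharged, infer `C`;
* `orE d₁ d₂ d₃` : from a deduction of the major premise `A ∨ B` and two
  deductions of `C` in which assumptions `A`, respectively `B`, may be
  discharged, infer `C`;
* `falsumE d` : from a deduction of `⊥` infer any `C`.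

Discharge is recorded by the function `hyps` below: a rule application
discharges all open occurrences of the indicated formulas in the indicated
subdeductions. -/
inductive Ded : Formula → Type
  | ass (A : Formula) : Ded A
  | andI {A B C : Formula} (d₁ : Ded A) (d₂ : Ded B) (d₃ : Ded C) : Ded C
  | impI (A : Formula) {B C : Formula} (d₁ : Ded B) (d₂ : Ded C) : Ded C
  | orI₁ {A : Formula} (B : Formula) {C : Formula} (d₁ : Ded A) (d₂ : Ded C) : Ded C
  | orI₂ (A : Formula) {B C : Formula} (d₁ : Ded B) (d₂ : Ded C) : Ded C
  | andE {A B C : Formula} (d₁ : Ded (Formula.and A B)) (d₂ : Ded C) : Ded C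
  | impE {A B C : Formula} (d₁ : Ded (Formula.imp A B)) (d₂ : Ded A) (d₃ : Ded C) : Ded C
  | orE {A B C : Formula} (d₁ : Ded (Formula.or A B)) (d₂ : Ded C) (d₃ : Ded C) : Ded C
  | falsumE {C : Formula} (d : Ded Formula.falsum) : Ded C

/-- The set of undischarged (open) assumptions of a deduction. -/
def hyps : ∀ {C : Formula}, Ded C → Set Formula
  | _, .ass A => {A}
  | _, @Ded.andI A B _ d₁ d₂ d₃ => hyps d₁ ∪ hyps d₂ ∪ (hyps d₃ \ {Formula.and A B})
  | _, @Ded.impI A B _ d₁ d₂ => (hyps d₁ \ {A}) ∪ (hyps d₂ \ {Formula.imp A B})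
  | _, @Ded.orI₁ A B _ d₁ d₂ => hyps d₁ ∪ (hyps d₂ \ {Formula.or A B})
  | _, @Ded.orI₂ A B _ d₁ d₂ => hyps d₁ ∪ (hyps d₂ \ {Formula.or A B})
  | _, @Ded.andE A B _ d₁ d₂ => hyps d₁ ∪ (hyps d₂ \ {A, B})
  | _, @Ded.impE _ B _ d₁ d₂ d₃ => hyps d₁ ∪ hyps d₂ ∪ (hyps d₃ \ {B})
  | _, @Ded.orE A B _ d₁ d₂ d₃ => hyps d₁ ∪ (hyps d₂ \ {A}) ∪ (hyps d₃ \ {B})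
  | _, .falsumE d => hyps d
/-- `d.isAss` holds iff `d` is a one-formula deduction, i.e. an assumption. -/
def Ded.isAss : ∀ {C : Formula}, Ded C → Bool
  | _, .ass _ => true
  | _, _ => false

/-- `MajorOpen F d` : somewhere in `d` there is an occurrence of the formula
`F` as an assumption (a leaf of the tree) that is the major premise of an
application of an elimination rule, and this occurrence is not discharged
within `d` (so that it can be discharged by a rule applied below `d`). -/
def MajorOpen (F : Formula) : ∀ {C : Formula}, Ded C → Prop
  | _, .ass _ => False
  | _, @Ded.andI A B _ d₁ d₂ d₃ =>
      MajorOpen F d₁ ∨ MajorOpen F d₂ ∨ (MajorOpen F d₃ ∧ F ≠ Formula.and A B)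
  | _, @Ded.impI A B _ d₁ d₂ =>
      (MajorOpen F d₁ ∧ F ≠ A) ∨ (MajorOpen F d₂ ∧ F ≠ Formula.imp A B)
  | _, @Ded.orI₁ A B _ d₁ d₂ =>
      MajorOpen F d₁ ∨ (MajorOpen F d₂ ∧ F ≠ Formula.or A B)
  | _, @Ded.orI₂ A B _ d₁ d₂ =>
      MajorOpen F d₁ ∨ (MajorOpen F d₂ ∧ F ≠ Formula.or A B)
  | _, @Ded.andE A B _ d₁ d₂ =>
      (F = Formula.and A B ∧ d₁.isAss = true) ∨ MajorOpen F d₁ ∨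
        (MajorOpen F d₂ ∧ F ≠ A ∧ F ≠ B)
  | _, @Ded.impE A B _ d₁ d₂ d₃ =>
      (F = Formula.imp A B ∧ d₁.isAss = true) ∨ MajorOpen F d₁ ∨ MajorOpen F d₂ ∨
        (MajorOpen F d₃ ∧ F ≠ B)
  | _, @Ded.orE A B _ d₁ d₂ d₃ =>
      (F = Formula.or A B ∧ d₁.isAss = true) ∨ MajorOpen F d₁ ∨
        (MajorOpen F d₂ ∧ F ≠ A) ∨ (MajorOpen F d₃ ∧ F ≠ B)
  | _, @Ded.falsumE _ d => (F = Formula.falsum ∧ d.isAss = true) ∨ MajorOpen F d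

/-- `HasMaxFormula d` : the deduction `d` contains a maximal formula, i.e. an
occurrence of a formula `A ∗ B` that is at the same time the major premise of
an application of `∗E` and the major assumption discharged by an application of
`∗I`. -/
def HasMaxFormula : ∀ {C : Formula}, Ded C → Prop
  | _, .ass _ => False
  | _, @Ded.andI A B _ d₁ d₂ d₃ =>
      MajorOpen (Formula.and A B) d₃ ∨ HasMaxFormula d₁ ∨ HasMaxFormula d₂ ∨ HasMaxFormula d₃
  | _, @Ded.impI A B _ d₁ d₂ =>
      MajorOpen (Formula.imp A B) d₂ ∨ HasMaxFormula d₁ ∨ HasMaxFormula d₂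
  | _, @Ded.orI₁ A B _ d₁ d₂ =>
      MajorOpen (Formula.or A B) d₂ ∨ HasMaxFormula d₁ ∨ HasMaxFormula d₂
  | _, @Ded.orI₂ A B _ d₁ d₂ =>
      MajorOpen (Formula.or A B) d₂ ∨ HasMaxFormula d₁ ∨ HasMaxFormula d₂
  | _, .andE d₁ d₂ => HasMaxFormula d₁ ∨ HasMaxFormula d₂
  | _, .impE d₁ d₂ d₃ => HasMaxFormula d₁ ∨ HasMaxFormula d₂ ∨ HasMaxFormula d₃
  | _, .orE d₁ d₂ d₃ => HasMaxFormula d₁ ∨ HasMaxFormula d₂ ∨ HasMaxFormula d₃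
  | _, .falsumE d => HasMaxFormula d

/-- The root rule application of `d` has an arbitrary premise; equivalently,
the conclusion of `d` is immediately preceded by an arbitrary premise of the
same shape, so that the conclusion of `d` is the last formula of a segment
(a sequence of occurrences of the same formula each of which is an arbitrary
premise of an application of a rule whose conclusion is the next one). -/
def Ded.endsWithArbitrary : ∀ {C : Formula}, Ded C → Prop
  | _, .ass _ => False
  | _, .falsumE _ => False
  | _, _ => True

/-- `HasMaxSegment d` : the deduction `d` contains a maximal segment, i.e. a
segment (of length `> 1`) whose last formula is the major premise of an
application of an elimination rule.  Since the first formula of a segment is an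
arbitrary premise and each later formula is the conclusion of a rule applied to
an arbitrary premise, this happens exactly when the major premise of some
elimination rule application in `d` is the conclusion of a rule application
that has an arbitrary premise. -/
def HasMaxSegment : ∀ {C : Formula}, Ded C → Prop
  | _, .ass _ => False
  | _, .andI d₁ d₂ d₃ => HasMaxSegment d₁ ∨ HasMaxSegment d₂ ∨ HasMaxSegment d₃
  | _, .impI _ d₁ d₂ => HasMaxSegment d₁ ∨ HasMaxSegment d₂
  | _, .orI₁ _ d₁ d₂ => HasMaxSegment d₁ ∨ HasMaxSegment d₂
  | _, .orI₂ _ d₁ d₂ => HasMaxSegment d₁ ∨ HasMaxSegment d₂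
  | _, .andE d₁ d₂ => d₁.endsWithArbitrary ∨ HasMaxSegment d₁ ∨ HasMaxSegment d₂
  | _, .impE d₁ d₂ d₃ =>
      d₁.endsWithArbitrary ∨ HasMaxSegment d₁ ∨ HasMaxSegment d₂ ∨ HasMaxSegment d₃
  | _, .orE d₁ d₂ d₃ =>
      d₁.endsWithArbitrary ∨ HasMaxSegment d₁ ∨ HasMaxSegment d₂ ∨ HasMaxSegment d₃
  | _, .falsumE d => d.endsWithArbitrary ∨ HasMaxSegment d

/-- A deduction is in normal form if it contains neither maximal formulas nor
maximal segments. -/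
def NormalForm {C : Formula} (d : Ded C) : Prop := ¬ HasMaxFormula d ∧ ¬ HasMaxSegment d

/-- The degree of a formula: the number of connectives occurring in it (`⊥` is
a connective, atomic formulas have degree `0`). -/
def Formula.degree : Formula → ℕ
  | .atom _ => 0
  | .falsum => 1
  | .and A B => A.degree + B.degree + 1
  | .or A B => A.degree + B.degree + 1
  | .imp A B => A.degree + B.degree + 1

/-- Counting version of `MajorOpen`: the number of occurrences of `F` in `d` as
an assumption (leaf) that is the major premise of an application of an
elimination rule and is not discharged within `d`. -/
def countMajorOpen (F : Formula) : ∀ {C : Formula}, Ded C → ℕ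
  | _, .ass _ => 0
  | _, @Ded.andI A B _ d₁ d₂ d₃ =>
      countMajorOpen F d₁ + countMajorOpen F d₂ +
        (if F = Formula.and A B then 0 else countMajorOpen F d₃)
  | _, @Ded.impI A B _ d₁ d₂ =>
      (if F = A then 0 else countMajorOpen F d₁) +
        (if F = Formula.imp A B then 0 else countMajorOpen F d₂)
  | _, @Ded.orI₁ A B _ d₁ d₂ =>
      countMajorOpen F d₁ + (if F = Formula.or A B then 0 else countMajorOpen F d₂)
  | _, @Ded.orI₂ A B _ d₁ d₂ =>
      countMajorOpen F d₁ + (if F = Formula.or A B then 0 else countMajorOpen F d₂)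
  | _, @Ded.andE A B _ d₁ d₂ =>
      (if F = Formula.and A B ∧ d₁.isAss = true then 1 else 0) + countMajorOpen F d₁ +
        (if F = A ∨ F = B then 0 else countMajorOpen F d₂)
  | _, @Ded.impE A B _ d₁ d₂ d₃ =>
      (if F = Formula.imp A B ∧ d₁.isAss = true then 1 else 0) + countMajorOpen F d₁ +
        countMajorOpen F d₂ + (if F = B then 0 else countMajorOpen F d₃)
  | _, @Ded.orE A B _ d₁ d₂ d₃ =>
      (if F = Formula.or A B ∧ d₁.isAss = true then 1 else 0) + countMajorOpen F d₁ +
        (if F = A then 0 else countMajorOpen F d₂) +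
        (if F = B then 0 else countMajorOpen F d₃)
  | _, .falsumE d => countMajorOpen F d

/-- The multiset of the degrees of all maximal formulas in a deduction: each
application of an introduction rule for `∗` contributes one occurrence of the
degree of `A ∗ B` for each occurrence of `A ∗ B` it discharges that is the
major premise of an application of `∗E`. -/
def maxFormulaDegrees : ∀ {C : Formula}, Ded C → Multiset ℕ
  | _, .ass _ => 0
  | _, @Ded.andI A B _ d₁ d₂ d₃ =>
      Multiset.replicate (countMajorOpen (Formula.and A B) d₃) (Formula.and A B).degree +
        maxFormulaDegrees d₁ + maxFormulaDegrees d₂ + maxFormulaDegrees d₃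
  | _, @Ded.impI A B _ d₁ d₂ =>
      Multiset.replicate (countMajorOpen (Formula.imp A B) d₂) (Formula.imp A B).degree +
        maxFormulaDegrees d₁ + maxFormulaDegrees d₂
  | _, @Ded.orI₁ A B _ d₁ d₂ =>
      Multiset.replicate (countMajorOpen (Formula.or A B) d₂) (Formula.or A B).degree +
        maxFormulaDegrees d₁ + maxFormulaDegrees d₂
  | _, @Ded.orI₂ A B _ d₁ d₂ =>
      Multiset.replicate (countMajorOpen (Formula.or A B) d₂) (Formula.or A B).degree +
        maxFormulaDegrees d₁ + maxFormulaDegrees d₂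
  | _, .andE d₁ d₂ => maxFormulaDegrees d₁ + maxFormulaDegrees d₂
  | _, .impE d₁ d₂ d₃ => maxFormulaDegrees d₁ + maxFormulaDegrees d₂ + maxFormulaDegrees d₃
  | _, .orE d₁ d₂ d₃ => maxFormulaDegrees d₁ + maxFormulaDegrees d₂ + maxFormulaDegrees d₃
  | _, .falsumE d => maxFormulaDegrees d

/-- The multiset of the lengths of the (maximal-length) chains of occurrences
of the conclusion of `d` obtained by repeatedly passing from the conclusion of
a rule application to its arbitrary premise.  A chain of length `n ≥ 2` ending
in the major premise of an elimination rule is a maximal segment of length `n`. -/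
def chains : ∀ {C : Formula}, Ded C → Multiset ℕ
  | _, .ass _ => {1}
  | _, .andI _ _ d₃ => (chains d₃).map (· + 1)
  | _, .impI _ _ d₂ => (chains d₂).map (· + 1)
  | _, .orI₁ _ _ d₂ => (chains d₂).map (· + 1)
  | _, .orI₂ _ _ d₂ => (chains d₂).map (· + 1)
  | _, .andE _ d₂ => (chains d₂).map (· + 1)
  | _, .impE _ _ d₃ => (chains d₃).map (· + 1)
  | _, .orE _ d₂ d₃ => (chains d₂).map (· + 1) + (chains d₃).map (· + 1)
  | _, .falsumE _ => {1}

/-- The multiset of (degree, length) pairs of the maximal segments of a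
deduction: for each application of an elimination rule, each chain of length
`≥ 2` ending in its major premise is a maximal segment, whose degree is the
degree of the major premise. -/
def maxSegments : ∀ {C : Formula}, Ded C → Multiset (ℕ × ℕ)
  | _, .ass _ => 0
  | _, .andI d₁ d₂ d₃ => maxSegments d₁ + maxSegments d₂ + maxSegments d₃
  | _, .impI _ d₁ d₂ => maxSegments d₁ + maxSegments d₂
  | _, .orI₁ _ d₁ d₂ => maxSegments d₁ + maxSegments d₂
  | _, .orI₂ _ d₁ d₂ => maxSegments d₁ + maxSegments d₂
  | _, @Ded.andE A B _ d₁ d₂ =>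
      ((chains d₁).filter (fun n => 2 ≤ n)).map (fun n => ((Formula.and A B).degree, n)) +
        maxSegments d₁ + maxSegments d₂
  | _, @Ded.impE A B _ d₁ d₂ d₃ =>
      ((chains d₁).filter (fun n => 2 ≤ n)).map (fun n => ((Formula.imp A B).degree, n)) +
        maxSegments d₁ + maxSegments d₂ + maxSegments d₃
  | _, @Ded.orE A B _ d₁ d₂ d₃ =>
      ((chains d₁).filter (fun n => 2 ≤ n)).map (fun n => ((Formula.or A B).degree, n)) +
        maxSegments d₁ + maxSegments d₂ + maxSegments d₃
  | _, .falsumE d =>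
      ((chains d).filter (fun n => 2 ≤ n)).map (fun n => (Formula.falsum.degree, n)) +
        maxSegments d

/-- The highest degree of a maximal formula or maximal segment in a deduction
(`0` if there is none). -/
def maxDegree {C : Formula} (d : Ded C) : ℕ :=
  (maxFormulaDegrees d + (maxSegments d).map Prod.fst).sup

/-- The rank of a deduction `Π` is the pair `⟨d, l⟩` where `d` is the highest
degree of a maximal formula or maximal segment in `Π` (`0` if there is none)
and `l` is the sum of the lengths of the maximal segments of highest degree
plus the number of maximal formulas in `Π`. -/
def rank {C : Formula} (d : Ded C) : ℕ × ℕ :=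
  (maxDegree d,
    (((maxSegments d).filter (fun s => s.1 = maxDegree d)).map Prod.snd).sum +
      Multiset.card (maxFormulaDegrees d))

theorem major_count (F : Formula) (hF : F ≠ Formula.falsum) {C : Formula} (d : Ded C) :
    MajorOpen F d → 0 < countMajorOpen F d := by
  induction d <;> simp only [MajorOpen, countMajorOpen] <;> grind

theorem hasMaxFormula_deg {C : Formula} (d : Ded C) :
    HasMaxFormula d → ∃ x ∈ maxFormulaDegrees d, 0 < x := by
  induction d with
  | ass A => simp [HasMaxFormula]
  | andI d₁ d₂ d₃ h1 h2 h3 =>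
    simp only [HasMaxFormula, maxFormulaDegrees, Multiset.mem_add]
    rintro (h | h | h | h)
    · have := major_count _ (by simp) _ h
      exact ⟨_, Or.inl (Or.inl (Or.inl (Multiset.mem_replicate.2 ⟨by omega, rfl⟩))),
        by simp [Formula.degree]⟩
    all_goals grind
  | impI A d₁ d₂ h1 h2 =>
    simp only [HasMaxFormula, maxFormulaDegrees, Multiset.mem_add]
    rintro (h | h | h)
    · have := major_count _ (by simp) _ h
      exact ⟨_, Or.inl (Or.inl (Multiset.mem_replicate.2 ⟨by omega, rfl⟩)),
        by simp [Formula.degree]⟩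
    all_goals grind
  | orI₁ A d₁ d₂ h1 h2 =>
    simp only [HasMaxFormula, maxFormulaDegrees, Multiset.mem_add]
    rintro (h | h | h)
    · have := major_count _ (by simp) _ h
      exact ⟨_, Or.inl (Or.inl (Multiset.mem_replicate.2 ⟨by omega, rfl⟩)),
        by simp [Formula.degree]⟩
    all_goals grind
  | orI₂ A d₁ d₂ h1 h2 =>
    simp only [HasMaxFormula, maxFormulaDegrees, Multiset.mem_add]
    rintro (h | h | h)
    · have := major_count _ (by simp) _ h
      exact ⟨_, Or.inl (Or.inl (Multiset.mem_replicate.2 ⟨by omega, rfl⟩)),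
        by simp [Formula.degree]⟩
    all_goals grind
  | _ => simp only [HasMaxFormula, maxFormulaDegrees, Multiset.mem_add]; grind

theorem chains_pos {C : Formula} (d : Ded C) : ∃ n ∈ chains d, 1 ≤ n := by
  induction d with
  | orE d₁ d₂ d₃ h1 h2 h3 =>
    obtain ⟨n, hn, h⟩ := h2
    exact ⟨n + 1, Multiset.mem_add.2 (Or.inl (Multiset.mem_map.2 ⟨n, hn, rfl⟩)), by omega⟩
  | _ => simp only [chains, Multiset.mem_map, Multiset.mem_singleton]; grind

theorem chains_two {C : Formula} (d : Ded C) (h : d.endsWithArbitrary) :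
    ∃ n ∈ chains d, 2 ≤ n := by
  have key : ∀ {D : Formula} (e : Ded D), ∃ n, (∃ a ∈ chains e, a + 1 = n) ∧ 2 ≤ n := by
    intro D e
    obtain ⟨n, hn, h1⟩ := chains_pos e
    exact ⟨n + 1, ⟨n, hn, rfl⟩, by omega⟩
  cases d with
  | ass => exact h.elim
  | falsumE => exact h.elim
  | andI _ _ e => simpa [chains] using key e
  | impI _ _ e => simpa [chains] using key e
  | orI₁ _ _ e => simpa [chains] using key e
  | orI₂ _ _ e => simpa [chains] using key e
  | andE _ e => simpa [chains] using key e
  | impE _ _ e => simpa [chains] using key e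
  | orE _ e e' =>
    obtain ⟨n, hn, h2⟩ := key e
    exact ⟨n, by simp only [chains, Multiset.mem_add, Multiset.mem_map]; exact Or.inl hn, h2⟩

theorem seg_of_arb {C : Formula} (d : Ded C) (h : d.endsWithArbitrary) (k : ℕ) :
    ∃ n, (k, n) ∈ ((chains d).filter (fun n => 2 ≤ n)).map (fun n => (k, n)) := by
  obtain ⟨n, hn, h2⟩ := chains_two d h
  exact ⟨n, Multiset.mem_map.2 ⟨n, Multiset.mem_filter.2 ⟨hn, h2⟩, rfl⟩⟩

theorem hasMaxSegment_deg {C : Formula} (d : Ded C) :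
    HasMaxSegment d → ∃ s ∈ maxSegments d, 0 < s.1 := by
  induction d with
  | @andE A B C d₁ d₂ h1 h2 =>
    simp only [HasMaxSegment, maxSegments, Multiset.mem_add]
    rintro (h | h | h)
    · obtain ⟨n, hn⟩ := seg_of_arb d₁ h (Formula.and A B).degree
      exact ⟨_, Or.inl (Or.inl hn), by simp [Formula.degree]⟩
    all_goals grind
  | @impE A B C d₁ d₂ d₃ h1 h2 h3 =>
    simp only [HasMaxSegment, maxSegments, Multiset.mem_add]
    rintro (h | h | h | h)
    · obtain ⟨n, hn⟩ := seg_of_arb d₁ h (Formula.imp A B).degree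
      exact ⟨_, Or.inl (Or.inl (Or.inl hn)), by simp [Formula.degree]⟩
    all_goals grind
  | @orE A B C d₁ d₂ d₃ h1 h2 h3 =>
    simp only [HasMaxSegment, maxSegments, Multiset.mem_add]
    rintro (h | h | h | h)
    · obtain ⟨n, hn⟩ := seg_of_arb d₁ h (Formula.or A B).degree
      exact ⟨_, Or.inl (Or.inl (Or.inl hn)), by simp [Formula.degree]⟩
    all_goals grind
  | falsumE d h1 =>
    simp only [HasMaxSegment, maxSegments, Multiset.mem_add]
    rintro (h | h)
    · obtain ⟨n, hn⟩ := seg_of_arb d h Formula.falsum.degree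
      exact ⟨_, Or.inl hn, by simp [Formula.degree]⟩
    all_goals grind
  | _ => simp only [HasMaxSegment, maxSegments, Multiset.mem_add]; grind

theorem maxDegree_pos {C : Formula} (d : Ded C) (h : ¬ NormalForm d) : 0 < maxDegree d := by
  unfold maxDegree
  have : HasMaxFormula d ∨ HasMaxSegment d := by
    unfold NormalForm at h; tauto
  rcases this with h | h
  · obtain ⟨x, hx, h0⟩ := hasMaxFormula_deg d h
    exact lt_of_lt_of_le h0 (Multiset.le_sup (Multiset.mem_add.2 (Or.inl hx)))
  · obtain ⟨s, hx, h0⟩ := hasMaxSegment_deg d h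
    exact lt_of_lt_of_le h0 (Multiset.le_sup (Multiset.mem_add.2 (Or.inr
      (Multiset.mem_map.2 ⟨_, hx, rfl⟩))))

/-- There is a normal deduction of `C` with open assumptions in `Γ`. -/
def Nf (Γ : Set Formula) (C : Formula) : Prop :=
  ∃ d : Ded C, maxFormulaDegrees d = 0 ∧ maxSegments d = 0 ∧ hyps d ⊆ Γ

/-- Covering: `P` holds at all leaves of a tree of eliminations on assumptions. -/
inductive Cov (P : Set Formula → Prop) : Set Formula → Prop
  | base {Γ : Set Formula} : P Γ → Cov P Γ
  | bot {Γ : Set Formula} : Formula.falsum ∈ Γ → Cov P Γ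
  | and {Γ : Set Formula} {A B : Formula} : Formula.and A B ∈ Γ → Cov P (Γ ∪ {A, B}) → Cov P Γ
  | or {Γ : Set Formula} {A B : Formula} : Formula.or A B ∈ Γ → Cov P (Γ ∪ {A}) →
      Cov P (Γ ∪ {B}) → Cov P Γ
  | imp {Γ : Set Formula} {A B : Formula} : Formula.imp A B ∈ Γ → Nf Γ A →
      Cov P (Γ ∪ {B}) → Cov P Γ

theorem Nf.mono {Γ Δ : Set Formula} {C : Formula} (h : Nf Γ C) (s : Γ ⊆ Δ) : Nf Δ C := by
  obtain ⟨d, h1, h2, h3⟩ := h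
  exact ⟨d, h1, h2, h3.trans s⟩

theorem Cov.mono {P : Set Formula → Prop} (hP : ∀ Γ Δ, Γ ⊆ Δ → P Γ → P Δ)
    {Γ : Set Formula} (h : Cov P Γ) : ∀ Δ, Γ ⊆ Δ → Cov P Δ := by
  induction h with
  | base h => intro Δ s; exact .base (hP _ _ s h)
  | bot h => intro Δ s; exact .bot (s h)
  | and h _ ih => intro Δ s; exact .and (s h) (ih _ (Set.union_subset_union_left _ s))
  | or h _ _ ih1 ih2 =>
    intro Δ s
    exact .or (s h) (ih1 _ (Set.union_subset_union_left _ s))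
      (ih2 _ (Set.union_subset_union_left _ s))
  | imp h n _ ih =>
    intro Δ s; exact .imp (s h) (n.mono s) (ih _ (Set.union_subset_union_left _ s))

theorem Cov.bind {P Q : Set Formula → Prop} {Γ : Set Formula} (h : Cov P Γ) :
    (∀ Δ, Γ ⊆ Δ → P Δ → Cov Q Δ) → Cov Q Γ := by
  induction h with
  | base h => intro f; exact f _ subset_rfl h
  | bot h => intro f; exact .bot h
  | and h _ ih =>
    intro f; exact .and h (ih fun Δ s => f Δ (Set.subset_union_left.trans s))
  | or h _ _ ih1 ih2 =>
    intro f
    exact .or h (ih1 fun Δ s => f Δ (Set.subset_union_left.trans s))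
      (ih2 fun Δ s => f Δ (Set.subset_union_left.trans s))
  | imp h n _ ih =>
    intro f; exact .imp h n (ih fun Δ s => f Δ (Set.subset_union_left.trans s))

theorem Cov.nf {C : Formula} {Γ : Set Formula} (h : Cov (fun Δ => Nf Δ C) Γ) : Nf Γ C := by
  induction h with
  | base h => exact h
  | bot h =>
    exact ⟨.falsumE (.ass _), by simp [maxFormulaDegrees], by simp [maxSegments, chains],
      by simpa [hyps] using h⟩
  | @and Γ A B h _ ih =>
    obtain ⟨d, h1, h2, h3⟩ := ih
    refine ⟨.andE (.ass (.and A B)) d, by simp [maxFormulaDegrees, h1],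
      by simp [maxSegments, chains, h2], ?_⟩
    simp only [hyps]
    exact Set.union_subset (by simpa using h) (by rw [Set.diff_subset_iff, Set.union_comm]; exact h3)
  | @or Γ A B h _ _ ih ih' =>
    obtain ⟨d, h1, h2, h3⟩ := ih
    obtain ⟨e, g1, g2, g3⟩ := ih'
    refine ⟨.orE (.ass (.or A B)) d e, by simp [maxFormulaDegrees, h1, g1],
      by simp [maxSegments, chains, h2, g2], ?_⟩
    simp only [hyps]
    exact Set.union_subset (Set.union_subset (by simpa using h)
      (by rw [Set.diff_subset_iff, Set.union_comm]; exact h3))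
      (by rw [Set.diff_subset_iff, Set.union_comm]; exact g3)
  | @imp Γ A B h n _ ih =>
    obtain ⟨d, h1, h2, h3⟩ := n
    obtain ⟨e, g1, g2, g3⟩ := ih
    refine ⟨.impE (.ass (.imp A B)) d e, by simp [maxFormulaDegrees, h1, g1],
      by simp [maxSegments, chains, h2, g2], ?_⟩
    simp only [hyps]
    exact Set.union_subset (Set.union_subset (by simpa using h) h3)
      (by rw [Set.diff_subset_iff, Set.union_comm]; exact g3)

/-- Semantic interpretation of formulas. -/
def Sem : Formula → Set Formula → Prop
  | .atom n, Γ => Nf Γ (.atom n)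
  | .falsum, Γ => Cov (fun _ => False) Γ
  | .and A B, Γ => Sem A Γ ∧ Sem B Γ
  | .or A B, Γ => Cov (fun Δ => Sem A Δ ∨ Sem B Δ) Γ
  | .imp A B, Γ => ∀ Δ, Γ ⊆ Δ → Sem A Δ → Sem B Δ

theorem Sem.mono (A : Formula) : ∀ Γ Δ, Γ ⊆ Δ → Sem A Γ → Sem A Δ := by
  induction A with
  | atom n => intro Γ Δ s h; exact Nf.mono h s
  | falsum => intro Γ Δ s h; exact Cov.mono (fun _ _ _ h => h) h _ s
  | and A B iA iB => intro Γ Δ s h; exact ⟨iA _ _ s h.1, iB _ _ s h.2⟩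
  | or A B iA iB =>
    intro Γ Δ s h
    exact Cov.mono (fun _ _ s h => h.imp (iA _ _ s) (iB _ _ s)) h _ s
  | imp A B iA iB => intro Γ Δ s h Θ t; exact h Θ (s.trans t)

theorem Sem.paste (C : Formula) : ∀ (P : Set Formula → Prop) (Γ : Set Formula), 
    (∀ Γ Δ, Γ ⊆ Δ → P Γ → P Δ) → Cov P Γ →
    (∀ Δ, Γ ⊆ Δ → P Δ → Sem C Δ) → Sem C Γ := by
  induction C with
  | atom n => intro P Γ hP h f; exact Cov.nf (h.bind fun Δ s p => .base (f Δ s p))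
  | falsum => intro P Γ hP h f; exact h.bind f
  | and A B iA iB =>
    intro P Γ hP h f
    exact ⟨iA P Γ hP h fun Δ s p => (f Δ s p).1, iB P Γ hP h fun Δ s p => (f Δ s p).2⟩
  | or A B iA iB => intro P Γ hP h f; exact h.bind f
  | imp A B iA iB =>
    intro P Γ hP h f Δ s a
    exact iB P Δ hP (h.mono hP Δ s) fun Θ t p =>
      f Θ (s.trans t) p Θ subset_rfl (Sem.mono A _ _ t a)

theorem Nf.ass {Γ : Set Formula} {A : Formula} (h : A ∈ Γ) : Nf Γ A :=
  ⟨.ass A, by simp [maxFormulaDegrees], by simp [maxSegments], by simpa [hyps] using h⟩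

theorem Sem.both (A : Formula) : (∀ Γ, A ∈ Γ → Sem A Γ) ∧ (∀ Γ, Sem A Γ → Nf Γ A) := by
  induction A with
  | atom n => exact ⟨fun Γ h => Nf.ass h, fun Γ h => h⟩
  | falsum =>
    exact ⟨fun Γ h => .bot h, fun Γ h => Cov.nf (Cov.bind h fun _ _ p => p.elim)⟩
  | and A B iA iB =>
    constructor
    · intro Γ h
      have hc : Cov (fun Δ => A ∈ Δ ∧ B ∈ Δ) Γ := .and h (.base (by simp))
      have hm : ∀ Γ Δ : Set Formula, Γ ⊆ Δ → (A ∈ Γ ∧ B ∈ Γ) → (A ∈ Δ ∧ B ∈ Δ) :=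
        fun _ _ s h => ⟨s h.1, s h.2⟩
      exact ⟨Sem.paste A _ Γ hm hc fun Δ _ p => iA.1 Δ p.1,
        Sem.paste B _ Γ hm hc fun Δ _ p => iB.1 Δ p.2⟩
    · intro Γ h
      obtain ⟨d, h1, h2, h3⟩ := iA.2 Γ h.1
      obtain ⟨e, g1, g2, g3⟩ := iB.2 Γ h.2
      refine ⟨.andI d e (.ass (.and A B)), by simp [maxFormulaDegrees, countMajorOpen, h1, g1],
        by simp [maxSegments, h2, g2], ?_⟩
      simp [hyps, h3, g3]
  | or A B iA iB =>
    constructor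
    · intro Γ h
      exact .or h (.base (Or.inl (iA.1 _ (by simp)))) (.base (Or.inr (iB.1 _ (by simp))))
    · intro Γ h
      refine Cov.nf (Cov.bind h fun Δ _ p => .base ?_)
      rcases p with p | p
      · obtain ⟨d, h1, h2, h3⟩ := iA.2 Δ p
        refine ⟨.orI₁ B d (.ass (.or A B)), by simp [maxFormulaDegrees, countMajorOpen, h1],
          by simp [maxSegments, h2], ?_⟩
        simp [hyps, h3]
      · obtain ⟨d, h1, h2, h3⟩ := iB.2 Δ p
        refine ⟨.orI₂ A d (.ass (.or A B)), by simp [maxFormulaDegrees, countMajorOpen, h1],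
          by simp [maxSegments, h2], ?_⟩
        simp [hyps, h3]
  | imp A B iA iB =>
    constructor
    · intro Γ h Δ s a
      have hm : ∀ Γ Δ : Set Formula, Γ ⊆ Δ → B ∈ Γ → B ∈ Δ := fun _ _ s h => s h
      exact Sem.paste B (fun Δ => B ∈ Δ) Δ hm (.imp (s h) (iA.2 _ a) (.base (by simp)))
        fun Θ _ p => iB.1 Θ p
    · intro Γ h
      obtain ⟨d, h1, h2, h3⟩ := iB.2 _ (h (Γ ∪ {A}) Set.subset_union_left (iA.1 _ (by simp)))
      refine ⟨.impI A d (.ass (.imp A B)), by simp [maxFormulaDegrees, countMajorOpen, h1],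
        by simp [maxSegments, h2], ?_⟩
      simp only [hyps, Set.diff_self, Set.union_empty]
      rw [Set.diff_subset_iff, Set.union_comm]; exact h3

theorem Sem.sound {C : Formula} (d : Ded C) :
    ∀ Γ, (∀ A ∈ hyps d, Sem A Γ) → Sem C Γ := by
  have ext : ∀ (S : Set Formula) (A : Formula) (Γ Δ : Set Formula), Γ ⊆ Δ →
      (∀ F ∈ S \ {A}, Sem F Γ) → Sem A Δ → ∀ F ∈ S, Sem F Δ := by
    intro S A Γ Δ s h a F hF
    by_cases e : F = A
    · exact e ▸ a
    · exact Sem.mono _ _ _ s (h F ⟨hF, e⟩)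
  induction d with
  | ass A => intro Γ h; exact h A (by simp [hyps])
  | @andI A B C d₁ d₂ d₃ i1 i2 i3 =>
    intro Γ h
    simp only [hyps] at h
    exact i3 Γ (ext _ _ Γ Γ subset_rfl (fun F hF => h F (Or.inr hF))
      ⟨i1 Γ fun F hF => h F (Or.inl (Or.inl hF)), i2 Γ fun F hF => h F (Or.inl (Or.inr hF))⟩)
  | @impI A B C d₁ d₂ i1 i2 =>
    intro Γ h
    simp only [hyps] at h
    exact i2 Γ (ext _ _ Γ Γ subset_rfl (fun F hF => h F (Or.inr hF))
      fun Δ s a => i1 Δ (ext _ _ Γ Δ s (fun F hF => h F (Or.inl hF)) a))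
  | @orI₁ A B C d₁ d₂ i1 i2 =>
    intro Γ h
    simp only [hyps] at h
    exact i2 Γ (ext _ _ Γ Γ subset_rfl (fun F hF => h F (Or.inr hF))
      (.base (Or.inl (i1 Γ fun F hF => h F (Or.inl hF)))))
  | @orI₂ A B C d₁ d₂ i1 i2 =>
    intro Γ h
    simp only [hyps] at h
    exact i2 Γ (ext _ _ Γ Γ subset_rfl (fun F hF => h F (Or.inr hF))
      (.base (Or.inr (i1 Γ fun F hF => h F (Or.inl hF)))))
  | @andE A B C d₁ d₂ i1 i2 =>
    intro Γ h
    simp only [hyps] at h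
    have hab : Sem A Γ ∧ Sem B Γ := i1 Γ fun F hF => h F (Or.inl hF)
    refine i2 Γ fun F hF => ?_
    by_cases e : F = A
    · exact e ▸ hab.1
    by_cases e' : F = B
    · exact e' ▸ hab.2
    exact h F (Or.inr ⟨hF, by simp [e, e']⟩)
  | @impE A B C d₁ d₂ d₃ i1 i2 i3 =>
    intro Γ h
    simp only [hyps] at h
    have hab : Sem (.imp A B) Γ := i1 Γ fun F hF => h F (Or.inl (Or.inl hF))
    exact i3 Γ (ext _ _ Γ Γ subset_rfl (fun F hF => h F (Or.inr hF))
      (hab Γ subset_rfl (i2 Γ fun F hF => h F (Or.inl (Or.inr hF)))))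
  | @orE A B C d₁ d₂ d₃ i1 i2 i3 =>
    intro Γ h
    simp only [hyps] at h
    have hab : Sem (.or A B) Γ := i1 Γ fun F hF => h F (Or.inl (Or.inl hF))
    refine Sem.paste C (fun Δ => Sem A Δ ∨ Sem B Δ) Γ
      (fun _ _ s h => h.imp (Sem.mono _ _ _ s) (Sem.mono _ _ _ s)) hab fun Δ s p => ?_
    rcases p with p | p
    · exact i2 Δ (ext _ _ Γ Δ s (fun F hF => h F (Or.inl (Or.inr hF))) p)
    · exact i3 Δ (ext _ _ Γ Δ s (fun F hF => h F (Or.inr hF)) p)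
  | @falsumE C d i =>
    intro Γ h
    simp only [hyps] at h
    exact Sem.paste C (fun _ => False) Γ (fun _ _ _ h => h) (i Γ h) fun _ _ p => p.elim

/-- **Rank reduction**: for every deduction `Π` in I that is not in normal
form, there is a deduction `Π'` in I with the same conclusion, whose
undischarged assumptions are among those of `Π`, and whose rank is strictly
smaller than the rank of `Π` in the lexicographic order on ranks. -/
theorem rank_reduction {C : Formula} (d : Ded C) (h : ¬ NormalForm d) :
    ∃ d' : Ded C, hyps d' ⊆ hyps d ∧
      Prod.Lex (· < ·) (· < ·) (rank d') (rank d) := by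
  obtain ⟨e, h1, h2, h3⟩ := (Sem.both C).2 _ (Sem.sound d (hyps d) fun A hA => (Sem.both A).1 _ hA)
  refine ⟨e, h3, ?_⟩
  have h0 : maxDegree e = 0 := by simp [maxDegree, h1, h2]
  refine Prod.Lex.left _ _ ?_
  rw [h0]
  exact maxDegree_pos d h
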